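/- arXiv:2503.18691 — 2 statements merged into one kernel-verified Lean document; each statement's English description precedes it below -/
import Mathlib

section
/- Assume S ⊆ ℝ is discrete, Y ⊆ ℝ^k is a closed perfect set, Z ⊆ ℝ∖{0} is compact, and λY is gap-rich with exceptional set S for every λ ∈ Z. For any x ∈ per(ℤ,Y) of minimal period p, any ε > 0, and any compact K ⊆ ℝ∖S, there exist constants N₀ = N₀(x,K,ε,Z) ∈ ℕ and c₀ = c₀(x,K,ε,Z) > 0 such that for every N ≥ N₀ there exists y ∈ per(ℤ,Y) of period Np with sup_{j∈ℤ} d(x_j, y_j) < ε and Leb(K ∩ σ(H_{λy})) ≤ e^{−c₀N} for all λ ∈ Z, where Leb denotes Lebesgue measure on ℝ. -/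
/-!
Absorb the energy into the potential and say that `H_V` has a gap if `g ‖u‖² ≤ ‖H_V u‖²`. By
gap-richness and compactness of `K × Z`, finitely many approximants `y₁, …, y_M` of `x` have, with
one common `g`, a gap of `H_{λyᵢ}` at `E` for some `i`, whatever `(E, λ) ∈ K × Z`. The required `y`
follows, in each period, every `yᵢ` on a stretch of `4m` blocks with `m` proportional to `N`, and
then returns to `x`.

If `H_{λyᵢ}` has a gap at `E`, then testing it on truncations of `u` shows that the mass of `u` at
the middle of the `i`-th stretch is at most `κ^m` times its mass on the whole stretch plus a
multiple of the mass of `(H_{λy} - E) u` there, where `κ = (1 + g/2)⁻¹`. Cutting one bond in the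
middle of the `i`-th stretch of every period is therefore an exponentially small perturbation. The
cut operator is a direct sum of copies of one Jacobi matrix of size `q = Npk`, so `H_{λy}` has a gap
at every such `E` at distance at least `3 κ^{m/2}` from its `q` eigenvalues. Hence
`K ∩ σ(H_{λy})` is covered by `Mq` intervals of length `6 κ^{m/2}`.
-/

open Set MeasureTheory BoundedContinuousFunction

noncomputable section

/-- ℓ²(ℤ; ℝ). -/
abbrev Ell2 : Type := lp (fun _ : ℤ => ℝ) 2

/-- Spectrum of the discrete Schrödinger operator `H_W = Δ + W` on `ℓ²(ℤ)`:
`E` lies in the spectrum iff `H_W - E` is not a linear bijection of `ℓ²(ℤ)`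
(for bounded `W`, by the open mapping theorem this is equivalent to `H_W - E`
not being boundedly invertible). -/
def SchrodingerSpectrum (W : ℤ → ℝ) : Set ℝ :=
  {E : ℝ | ¬ ∃ T : Ell2 ≃ₗ[ℝ] Ell2,
      ∀ f : Ell2, ∀ n : ℤ,
        (T f) n = f (n - 1) + f (n + 1) + (W n - E) * f n}

/-- A Cantor set of zero Hausdorff dimension: nonempty, compact, without isolated
points, with empty interior, and of Hausdorff dimension zero. -/
def IsZeroDimCantor (s : Set ℝ) : Prop :=
  s.Nonempty ∧ IsCompact s ∧ Preperfect s ∧ interior s = ∅ ∧ dimH s = 0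

/-- Periodic bounded sequences. -/
def IsPeriodicSeq {α : Type*} [PseudoMetricSpace α] (W : ℤ →ᵇ α) : Prop :=
  ∃ q : ℕ, 0 < q ∧ ∀ n : ℤ, W (n + q) = W n

/-- The limit-periodic functions `ℤ → ℝ`: uniform limits of periodic functions. -/
def LPZ : Set (ℤ →ᵇ ℝ) := closure {W : ℤ →ᵇ ℝ | IsPeriodicSeq W}

/-- A subset of ℝ is discrete if it has no accumulation points. -/
def IsDiscreteSet (S : Set ℝ) : Prop := ∀ x : ℝ, ¬ AccPt x (Filter.principal S)

/-- Periodic extension `w^{♯ℤ}` of a finite word `w`. -/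
def perExt {α : Type*} [Zero α] {m : ℕ} (w : Fin m → α) : ℤ → α :=
  fun n =>
    if h : 0 < m then
      w ⟨(n % (m : ℤ)).toNat, by
        have h1 : 0 ≤ n % (m : ℤ) := Int.emod_nonneg n (by exact_mod_cast h.ne')
        have h2 : n % (m : ℤ) < (m : ℤ) := Int.emod_lt_of_pos n (by exact_mod_cast h)
        omega⟩
    else 0

/-- Aggregation `y^♮` of a sequence of blocks in `ℝ^k` into a potential `ℤ → ℝ`. -/
def agg (k : ℕ) (x : ℤ → (Fin k → ℝ)) : ℤ → ℝ :=
  fun n =>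
    if h : 0 < k then
      x (Int.fdiv n k) ⟨(n % (k : ℤ)).toNat, by
        have h1 : 0 ≤ n % (k : ℤ) := Int.emod_nonneg n (by exact_mod_cast h.ne')
        have h2 : n % (k : ℤ) < (k : ℤ) := Int.emod_lt_of_pos n (by exact_mod_cast h)
        omega⟩
    else 0

/-- `Y ⊆ ℝ^k` is gap-rich with exceptional set `S`: `S` is discrete and near any
word over `Y` there is a word over `Y` whose periodic Schrödinger operator has a
gap at any prescribed energy `E ∉ S`. -/
def GapRich (k : ℕ) (Y : Set (Fin k → ℝ)) (S : Set ℝ) : Prop :=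
  IsDiscreteSet S ∧
  ∀ E : ℝ, E ∉ S → ∀ m : ℕ, 0 < m → ∀ x : Fin m → (Fin k → ℝ), (∀ i, x i ∈ Y) →
    ∀ ε : ℝ, 0 < ε →
      ∃ l : ℕ, 0 < l ∧ ∃ y : Fin l → (Fin k → ℝ),
        (∀ i, y i ∈ Y) ∧
        (∀ j : ℤ, dist (perExt x j) (perExt y j) < ε) ∧
        E ∉ SchrodingerSpectrum (agg k (perExt y))

/-- The periodic elements of `Y^ℤ`. -/
def PerY (k : ℕ) (Y : Set (Fin k → ℝ)) : Set (ℤ →ᵇ (Fin k → ℝ)) :=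
  {x | IsPeriodicSeq x ∧ ∀ n : ℤ, x n ∈ Y}

/-- The limit-periodic elements of `Y^ℤ`: uniform limits of periodic elements. -/
def LPY (k : ℕ) (Y : Set (Fin k → ℝ)) : Set (ℤ →ᵇ (Fin k → ℝ)) := closure (PerY k Y)

/-! ### Spectral gaps -/

/-- The Schrödinger operator `H_V = Δ + V`, acting on all real sequences. -/
def schrodinger (V : ℤ → ℝ) : (ℤ → ℝ) →ₗ[ℝ] (ℤ → ℝ) where
  toFun u n := u (n - 1) + u (n + 1) + V n * u n
  map_add' u v := by ext n; simp only [Pi.add_apply]; ring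
  map_smul' c u := by ext n; simp only [Pi.smul_apply, smul_eq_mul, RingHom.id_apply]; ring

lemma schrodinger_apply (V u : ℤ → ℝ) (n : ℤ) :
    schrodinger V u n = u (n - 1) + u (n + 1) + V n * u n := rfl

/-- `H_V` has a spectral gap at energy `0`, in the quantitative form `g ‖u‖² ≤ ‖H_V u‖²`, that is,
`σ(H_V) ∩ (-√g, √g) = ∅`. The energy is absorbed into the potential: a gap of `H_W` at `E` is a gap
of `V = W - E`. -/
def HasGap (V : ℤ → ℝ) (g : ℝ) : Prop :=
  ∀ ⦃u : ℤ → ℝ⦄ ⦃U G : ℝ⦄, HasSum (fun n => u n ^ 2) U →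
    HasSum (fun n => schrodinger V u n ^ 2) G → g * U ≤ G

lemma HasGap.mono {V : ℤ → ℝ} {g g' : ℝ} (h : HasGap V g) (hg : g' ≤ g) : HasGap V g' := by
  intro u U G hU hG
  have hU0 : 0 ≤ U := hU.nonneg fun _ => sq_nonneg _
  exact (mul_le_mul_of_nonneg_right hg hU0).trans (h hU hG)

lemma HasGap.perturb {V V' : ℤ → ℝ} {g s : ℝ} (h : HasGap V g) (hV : ∀ n, |V n - V' n| ≤ s)
    (hs : 4 * s ^ 2 ≤ g) : HasGap V' (g / 4) := by
  intro u U G hU hG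
  have hle (n : ℤ) : schrodinger V u n ^ 2 ≤
      2 * schrodinger V' u n ^ 2 + 2 * s ^ 2 * u n ^ 2 := by
    have hsplit : schrodinger V u n = schrodinger V' u n + (V n - V' n) * u n := by
      simp only [schrodinger_apply]; ring
    calc schrodinger V u n ^ 2
        ≤ 2 * (schrodinger V' u n ^ 2 + ((V n - V' n) * u n) ^ 2) := by
          rw [hsplit]; exact add_sq_le
      _ = 2 * schrodinger V' u n ^ 2 + 2 * (V n - V' n) ^ 2 * u n ^ 2 := by ring
      _ ≤ 2 * schrodinger V' u n ^ 2 + 2 * s ^ 2 * u n ^ 2 := by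
          gcongr 2 * schrodinger V' u n ^ 2 + 2 * ?_ * _
          exact sq_le_sq.2 ((hV n).trans (le_abs_self s))
  have hbound := (hG.mul_left 2).add (hU.mul_left (2 * s ^ 2))
  obtain ⟨G₀, hG₀⟩ := Summable.of_nonneg_of_le (fun _ => sq_nonneg _) hle hbound.summable
  have hgap : g * U ≤ G₀ := h hU hG₀
  have hG₀le : G₀ ≤ 2 * G + 2 * s ^ 2 * U := hasSum_le hle hG₀ hbound
  have hU0 : 0 ≤ U := hU.nonneg fun _ => sq_nonneg _
  nlinarith

lemma Ell2.hasSum_sq (f : Ell2) : HasSum (fun n => f n ^ 2) (‖f‖ ^ 2) := by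
  simpa only [real_inner_self_eq_norm_sq, Real.norm_eq_abs, sq_abs] using
    lp.hasSum_inner (𝕜 := ℝ) f f

lemma memℓp_two_iff_summable_sq {u : ℤ → ℝ} :
    Memℓp u 2 ↔ Summable fun n => u n ^ 2 := by
  simp [memℓp_gen_iff]

lemma memℓp_two_comp_add {u : ℤ → ℝ} (hu : Memℓp u 2) (a : ℤ) :
    Memℓp (fun n => u (n + a)) 2 :=
  memℓp_two_iff_summable_sq.2
    ((memℓp_two_iff_summable_sq.1 hu).comp_injective (add_left_injective a))

lemma memℓp_two_schrodinger {V : ℤ → ℝ} (hV : Bornology.IsBounded (range V)) {u : ℤ → ℝ}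
    (hu : Memℓp u 2) : Memℓp (schrodinger V u) 2 := by
  obtain ⟨B, hB⟩ := isBounded_iff_forall_norm_le.1 hV
  have hmul : Memℓp (fun n => V n * u n) 2 := by
    refine memℓp_two_iff_summable_sq.2 (.of_nonneg_of_le (fun _ => sq_nonneg _) (fun n => ?_)
      ((memℓp_two_iff_summable_sq.1 hu).mul_left (B ^ 2)))
    rw [mul_pow, ← sq_abs (V n)]
    gcongr
    exact hB _ (mem_range_self n)
  exact ((memℓp_two_comp_add hu (-1)).add (memℓp_two_comp_add hu 1)).add hmul

/-- The self-adjoint operator `H_V` on `ℓ²(ℤ)` for a bounded potential `V`. -/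
def schrodingerEll2 (V : ℤ → ℝ) (hV : Bornology.IsBounded (range V)) : Ell2 →ₗ[ℝ] Ell2 where
  toFun f := ⟨schrodinger V f, memℓp_two_schrodinger hV f.2⟩
  map_add' f h := Subtype.ext (map_add (schrodinger V) (f : ℤ → ℝ) h)
  map_smul' c f := Subtype.ext (map_smul (schrodinger V) c (f : ℤ → ℝ))

lemma schrodingerEll2_isSymmetric (V : ℤ → ℝ) (hV : Bornology.IsBounded (range V)) :
    (schrodingerEll2 V hV).IsSymmetric := by
  intro f h
  obtain ⟨w, hw⟩ : Summable fun n => f (n + 1) * h n - f n * h (n + 1) := by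
    have key (f h : Ell2) : Summable fun n => f (n + 1) * h n := by
      simpa [mul_comm] using
        lp.summable_inner (𝕜 := ℝ) (⟨_, memℓp_two_comp_add f.2 1⟩ : Ell2) h
    simpa only [mul_comm] using (key f h).sub (key h f)
  -- the difference of the two sides is the telescoping sum of the increments of the Wronskian
  have htelescope := hw.sub ((Equiv.subRight (1 : ℤ)).hasSum_iff.2 hw)
  have hdiff := (lp.hasSum_inner (𝕜 := ℝ) (schrodingerEll2 V hV f) h).sub
    (lp.hasSum_inner (𝕜 := ℝ) f (schrodingerEll2 V hV h))
  rw [sub_self] at htelescope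
  refine sub_eq_zero.1 (hdiff.unique (htelescope.congr_fun fun n => ?_))
  change h n * schrodinger V f n - schrodinger V h n * f n = _
  simp only [schrodinger_apply, Function.comp_apply, Equiv.subRight_apply, sub_add_cancel]
  ring

section Symmetric

variable {𝕜 E : Type*} [RCLike 𝕜] [NormedAddCommGroup E] [InnerProductSpace 𝕜 E]

lemma bijective_iff_exists_antilipschitz_of_isSymmetric [CompleteSpace E] {T : E →ₗ[𝕜] E}
    (hT : T.IsSymmetric) :
    Function.Bijective T ↔ ∃ c, AntilipschitzWith c T := by
  let T' : E →L[𝕜] E := ⟨T, hT.continuous⟩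
  change Function.Bijective T' ↔ ∃ c, AntilipschitzWith c T'
  rw [ContinuousLinearMap.bijective_iff_dense_range_and_antilipschitz, and_iff_right_iff_imp]
  rintro ⟨c, hc⟩
  rw [Submodule.topologicalClosure_eq_top_iff]
  change T.rangeᗮ = ⊥
  rw [hT.orthogonal_range]
  exact LinearMap.ker_eq_bot.2 hc.injective

lemma exists_antilipschitz_iff_exists_mul_sq_le (T : E →L[𝕜] E) :
    (∃ c, AntilipschitzWith c T) ↔ ∃ g : ℝ, 0 < g ∧ ∀ v, g * ‖v‖ ^ 2 ≤ ‖T v‖ ^ 2 := by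
  constructor
  · rintro ⟨c, hc⟩
    refine ⟨((c : ℝ) ^ 2 + 1)⁻¹, by positivity, fun v => ?_⟩
    rw [inv_mul_le_iff₀ (by positivity)]
    have hv : ‖v‖ ≤ c * ‖T v‖ := T.bound_of_antilipschitz hc v
    calc ‖v‖ ^ 2 ≤ (c * ‖T v‖) ^ 2 := by gcongr
      _ ≤ (c ^ 2 + 1) * ‖T v‖ ^ 2 := by nlinarith [sq_nonneg ‖T v‖]
  · rintro ⟨g, hg, h⟩
    refine ⟨⟨(√g)⁻¹, by positivity⟩, T.antilipschitz_of_bound fun v => ?_⟩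
    change ‖v‖ ≤ (√g)⁻¹ * ‖T v‖
    rw [le_inv_mul_iff₀ (Real.sqrt_pos.2 hg)]
    refine Real.le_sqrt_of_sq_le ?_ |>.trans_eq (Real.sqrt_sq (norm_nonneg _))
    simpa [mul_pow, Real.sq_sqrt hg.le] using h v

end Symmetric

lemma hasGap_iff_schrodingerEll2 {V : ℤ → ℝ} (hV : Bornology.IsBounded (range V)) (g : ℝ) :
    HasGap V g ↔ ∀ f, g * ‖f‖ ^ 2 ≤ ‖schrodingerEll2 V hV f‖ ^ 2 := by
  refine ⟨fun h f => h (Ell2.hasSum_sq f) (Ell2.hasSum_sq (schrodingerEll2 V hV f)),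
    fun h u U G hU hG => ?_⟩
  let f : Ell2 := ⟨u, memℓp_two_iff_summable_sq.2 hU.summable⟩
  rw [hU.unique (Ell2.hasSum_sq f), hG.unique (Ell2.hasSum_sq (schrodingerEll2 V hV f))]
  exact h f

lemma notMem_schrodingerSpectrum_iff {W : ℤ → ℝ} (hW : Bornology.IsBounded (range W)) (E : ℝ) :
    E ∉ SchrodingerSpectrum W ↔ ∃ g > 0, HasGap (fun n => W n - E) g := by
  have hV : Bornology.IsBounded (range fun n => W n - E) := by
    simpa [← range_comp, Function.comp_def] using
      hW.sub (Bornology.isBounded_singleton (x := E))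
  set T := schrodingerEll2 _ hV
  have hT : T.IsSymmetric := schrodingerEll2_isSymmetric _ hV
  calc E ∉ SchrodingerSpectrum W
      ↔ ∃ T' : Ell2 ≃ₗ[ℝ] Ell2, (T' : Ell2 →ₗ[ℝ] Ell2) = T := by
        simp only [SchrodingerSpectrum, mem_ofPred_eq, not_not, LinearMap.ext_iff, lp.ext_iff,
          funext_iff]
        rfl
    _ ↔ Function.Bijective T :=
        ⟨fun ⟨T', hT'⟩ => hT' ▸ T'.bijective, fun h => ⟨.ofBijective T h, rfl⟩⟩
    _ ↔ ∃ c, AntilipschitzWith c (⟨T, hT.continuous⟩ : Ell2 →L[ℝ] Ell2) :=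
        bijective_iff_exists_antilipschitz_of_isSymmetric hT
    _ ↔ ∃ g > 0, HasGap (fun n => W n - E) g := by
        simp only [exists_antilipschitz_iff_exists_mul_sq_le, hasGap_iff_schrodingerEll2 hV]
        rfl

/-! ### Decay across a gapped stretch -/

lemma sum_Ico_sub_one_add_one {M : Type*} [AddCommMonoid M] (f : ℤ → M) {a b : ℤ} (hab : a ≤ b) :
    ∑ n ∈ Finset.Ico (a - 1) (b + 1), f n = f (a - 1) + (f b + ∑ n ∈ Finset.Ico a b, f n) := by
  have hinsert : Finset.Ico (a - 1) (b + 1) = insert (a - 1) (insert b (Finset.Ico a b)) := by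
    ext n; simp only [Finset.mem_Ico, Finset.mem_insert]; lia
  rw [hinsert, Finset.sum_insert, Finset.sum_insert] <;>
    simp only [Finset.mem_Ico, Finset.mem_insert] <;> lia

lemma schrodinger_indicator_Ico_congr {V V₀ : ℤ → ℝ} {a b : ℤ} (hV : ∀ n ∈ Ico a b, V n = V₀ n)
    (u : ℤ → ℝ) :
    schrodinger V ((Ico a b).indicator u) = schrodinger V₀ ((Ico a b).indicator u) := by
  ext n
  by_cases hn : n ∈ Ico a b <;> simp [schrodinger_apply, hn, hV]

lemma hasSum_schrodinger_indicator_Ico_sq (V u : ℤ → ℝ) {a b : ℤ} (hab : a < b) :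
    HasSum (fun n => schrodinger V ((Ico a b).indicator u) n ^ 2)
      (u a ^ 2 + (u (b - 1) ^ 2 +
        ∑ n ∈ Finset.Ico a b, schrodinger V ((Ico a b).indicator u) n ^ 2)) := by
  have ha : schrodinger V ((Ico a b).indicator u) (a - 1) = u a := by
    simp [schrodinger_apply, Set.indicator, hab]
  have hb : schrodinger V ((Ico a b).indicator u) b = u (b - 1) := by
    simp [schrodinger_apply, Set.indicator]; lia
  rw [← ha, ← hb, ← sum_Ico_sub_one_add_one (fun n => schrodinger V _ n ^ 2) hab.le]
  refine hasSum_sum_of_ne_finset_zero fun n hn => ?_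
  rw [Finset.mem_Ico] at hn
  have hzero {j : ℤ} (hj : j ∉ Ico a b) : (Ico a b).indicator u j = 0 := indicator_of_notMem hj u
  rw [schrodinger_apply, hzero (by simp only [mem_Ico]; lia), hzero (by simp only [mem_Ico]; lia),
    hzero (by simp only [mem_Ico]; lia)]
  simp

lemma sum_Ico_schrodinger_indicator_sq_le (V u : ℤ → ℝ) {a b : ℤ} (hab : a + 1 < b) :
    ∑ n ∈ Finset.Ico a b, schrodinger V ((Ico a b).indicator u) n ^ 2 ≤
      2 * ∑ n ∈ Finset.Ico a b, schrodinger V u n ^ 2 + 2 * (u (a - 1) ^ 2 + u b ^ 2) := by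
  have hterm : ∀ n ∈ Finset.Ico a b, schrodinger V ((Ico a b).indicator u) n ^ 2 ≤
      2 * schrodinger V u n ^ 2 +
        2 * ((if n = a then u (a - 1) ^ 2 else 0) + if n = b - 1 then u b ^ 2 else 0) := by
    intro n hn
    rw [Finset.mem_Ico] at hn
    have hsplit : schrodinger V ((Ico a b).indicator u) n = schrodinger V u n +
        -((if n = a then u (a - 1) else 0) + if n = b - 1 then u b else 0) := by
      simp only [schrodinger_apply, Set.indicator, mem_Ico]
      have hleft : a ≤ n - 1 ∧ n - 1 < b ↔ n ≠ a := by lia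
      have hright : a ≤ n + 1 ∧ n + 1 < b ↔ n ≠ b - 1 := by lia
      simp only [hleft, hright, hn, and_self, if_true]
      split_ifs <;> grind
    rw [hsplit]
    refine add_sq_le.trans_eq ?_
    split_ifs <;> first | lia | ring
  refine (Finset.sum_le_sum hterm).trans_eq ?_
  have ha : a ∈ Finset.Ico a b := Finset.mem_Ico.2 ⟨le_rfl, by lia⟩
  have hb : b - 1 ∈ Finset.Ico a b := Finset.mem_Ico.2 ⟨by lia, by lia⟩
  simp only [Finset.sum_add_distrib, ← Finset.mul_sum, Finset.sum_ite_eq', ha, hb, if_true]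

/-- Testing the gap on the truncation of `u` to `[a - 1, b]`. -/
lemma HasGap.sum_Ico_sq_le {V V₀ : ℤ → ℝ} {g : ℝ} (h : HasGap V₀ g) (hg : 0 ≤ g) {a b : ℤ}
    (hab : a ≤ b) (hV : ∀ n ∈ Ico (a - 1) (b + 1), V n = V₀ n) (u : ℤ → ℝ) :
    (2 + g) * ∑ n ∈ Finset.Ico a b, u n ^ 2 ≤
      2 * ∑ n ∈ Finset.Ico (a - 2) (b + 2), u n ^ 2 +
        2 * ∑ n ∈ Finset.Ico (a - 1) (b + 1), schrodinger V u n ^ 2 := by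
  set w := (Ico (a - 1) (b + 1)).indicator u
  have hU : HasSum (fun n => w n ^ 2) (∑ n ∈ Finset.Ico (a - 1) (b + 1), u n ^ 2) := by
    have hw : (fun n => w n ^ 2) = (Ico (a - 1) (b + 1)).indicator fun n => u n ^ 2 := by
      ext n; by_cases hn : n ∈ Ico (a - 1) (b + 1) <;> simp [w, hn]
    rw [hw, ← Finset.coe_Ico, ← Finset.sum_indicator_subset _ subset_rfl]
    exact hasSum_sum_of_ne_finset_zero fun n hn => indicator_of_notMem hn _
  have hgap := h hU (hasSum_schrodinger_indicator_Ico_sq V₀ u (by lia))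
  rw [← schrodinger_indicator_Ico_congr hV] at hgap
  have htrunc := sum_Ico_schrodinger_indicator_sq_le V u (show a - 1 + 1 < b + 1 by lia)
  have hinner := sum_Ico_sub_one_add_one (fun n => u n ^ 2) hab
  have houter := sum_Ico_sub_one_add_one (fun n => u n ^ 2) (show a - 1 ≤ b + 1 by lia)
  have hends : 0 ≤ g * (u (a - 1) ^ 2 + u b ^ 2) := by positivity
  simp only [show a - 1 - 1 = a - 2 by ring, show b + 1 + 1 = b + 2 by ring,
    show b + 1 - 1 = b by ring] at *
  rw [houter, hinner]
  rw [hinner] at hgap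
  linarith [sq_nonneg (u (a - 1)), sq_nonneg (u b)]

lemma HasGap.sum_Ico_sq_le_pow_mul {V V₀ : ℤ → ℝ} {g : ℝ} (h : HasGap V₀ g) (hg : 0 < g) {a b : ℤ}
    (hab : a ≤ b) (m : ℕ) (hV : ∀ n ∈ Ico (a - 2 * m + 1) (b + 2 * m - 1), V n = V₀ n)
    (u : ℤ → ℝ) :
    ∑ n ∈ Finset.Ico a b, u n ^ 2 ≤
      (1 + g / 2)⁻¹ ^ m * ∑ n ∈ Finset.Ico (a - 2 * m) (b + 2 * m), u n ^ 2 +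
        2 / g * ∑ n ∈ Finset.Ico (a - 2 * m) (b + 2 * m), schrodinger V u n ^ 2 := by
  set G := ∑ n ∈ Finset.Ico (a - 2 * m) (b + 2 * m), schrodinger V u n ^ 2
  let M (k : ℕ) := ∑ n ∈ Finset.Ico (a - 2 * k) (b + 2 * k), u n ^ 2
  have hstep : ∀ k < m, (1 + g / 2) * (M k - 2 / g * G) ≤ M (k + 1) - 2 / g * G := by
    intro k hk
    have hle := h.sum_Ico_sq_le hg.le (a := a - 2 * k) (b := b + 2 * k) (by lia)
      (fun n hn => hV n ⟨by linarith [hn.1], by linarith [hn.2]⟩) u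
    have hGk : ∑ n ∈ Finset.Ico (a - 2 * k - 1) (b + 2 * k + 1), schrodinger V u n ^ 2 ≤ G :=
      Finset.sum_le_sum_of_subset_of_nonneg
        (Finset.Ico_subset_Ico (by lia) (by lia)) fun _ _ _ => sq_nonneg _
    have hM : ∑ n ∈ Finset.Ico (a - 2 * k - 2) (b + 2 * k + 2), u n ^ 2 = M (k + 1) := by
      simp only [M]; congr 2 <;> push_cast <;> ring
    rw [hM] at hle
    have hcancel : (1 + g / 2) * (2 / g * G) = 2 / g * G + G := by field_simp
    linarith
  have hpow := geom_le (u := fun k => M k - 2 / g * G) (by positivity) m hstep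
  have hG0 : 0 ≤ 2 / g * G := by positivity
  have hM0 : M 0 = ∑ n ∈ Finset.Ico a b, u n ^ 2 := by simp [M]
  rw [← hM0, ← sub_le_iff_le_add, inv_pow, le_inv_mul_iff₀ (by positivity)]
  linarith

/-! ### Cutting one bond per period -/

lemma sq_mul_norm_sq_le_of_le_abs_eigenvalues_sub {𝕜 F : Type*} [RCLike 𝕜] [NormedAddCommGroup F]
    [InnerProductSpace 𝕜 F] [FiniteDimensional 𝕜 F] {T : F →ₗ[𝕜] F} (hT : T.IsSymmetric) {n : ℕ}
    (hn : Module.finrank 𝕜 F = n) {E δ : ℝ} (hδ : 0 ≤ δ)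
    (hE : ∀ j, δ ≤ |hT.eigenvalues hn j - E|) (v : F) :
    δ ^ 2 * ‖v‖ ^ 2 ≤ ‖T v - (E : 𝕜) • v‖ ^ 2 := by
  set b := hT.eigenvectorBasis hn
  have hcoord (j : Fin n) :
      inner 𝕜 (b j) (T v - (E : 𝕜) • v) =
        ((hT.eigenvalues hn j - E : ℝ) : 𝕜) * inner 𝕜 (b j) v := by
    rw [inner_sub_right, inner_smul_right, ← hT, hT.apply_eigenvectorBasis, inner_smul_left,
      RCLike.conj_ofReal]
    push_cast
    ring
  rw [← b.sum_sq_norm_inner_right v, ← b.sum_sq_norm_inner_right (T v - _), Finset.mul_sum]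
  refine Finset.sum_le_sum fun j _ => ?_
  rw [hcoord, norm_mul, mul_pow, RCLike.norm_ofReal]
  gcongr
  exact hE j

/-- The compression of `H_W` to the sites of `Λ`, i.e. the restriction with Dirichlet boundary
conditions; for an interval `Λ` it is a Jacobi matrix. -/
def compression (W : ℤ → ℝ) (Λ : Finset ℤ) : Matrix Λ Λ ℝ :=
  .of fun i j => schrodinger W (Pi.single ↑j 1) i

lemma compression_isHermitian (W : ℤ → ℝ) (Λ : Finset ℤ) : (compression W Λ).IsHermitian := by
  ext i j
  simp only [compression, Matrix.conjTranspose_apply, Matrix.of_apply, schrodinger_apply,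
    Pi.single_apply, star_trivial]
  grind

lemma compression_mulVec (W : ℤ → ℝ) (Λ : Finset ℤ) (u : ℤ → ℝ) (i : Λ) :
    (compression W Λ).mulVec (fun j => u j) i =
      schrodinger W ((Λ : Set ℤ).indicator u) i := by
  have hu : (Λ : Set ℤ).indicator u = ∑ j : Λ, u j • Pi.single (j : ℤ) (1 : ℝ) := by
    ext n
    by_cases hn : n ∈ Λ
    · rw [indicator_of_mem (Finset.mem_coe.2 hn), Finset.sum_apply,
        Finset.sum_eq_single ⟨n, hn⟩] <;> simp +contextual [Pi.single_apply, eq_comm]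
    · rw [indicator_of_notMem (by simpa using hn), Finset.sum_apply, Finset.sum_eq_zero]
      intro j _
      have hj : n ≠ j := fun h => hn (h ▸ j.2)
      simp [hj]
  simp only [hu, map_sum, map_smul, Finset.sum_apply, Pi.smul_apply, smul_eq_mul, Matrix.mulVec,
    dotProduct, compression, Matrix.of_apply, mul_comm]

lemma exists_eigenvalues_compression (W : ℤ → ℝ) (Λ : Finset ℤ) :
    ∃ ev : Fin Λ.card → ℝ, ∀ E δ : ℝ, 0 ≤ δ → (∀ j, δ ≤ |ev j - E|) → ∀ u : ℤ → ℝ,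
      δ ^ 2 * ∑ n ∈ Λ, u n ^ 2 ≤
        ∑ n ∈ Λ, schrodinger (fun n => W n - E) ((Λ : Set ℤ).indicator u) n ^ 2 := by
  have hT := Matrix.isSymmetric_toEuclideanLin_iff.2 (compression_isHermitian W Λ)
  refine ⟨hT.eigenvalues (by simp), fun E δ hδ hE u => ?_⟩
  have hle := sq_mul_norm_sq_le_of_le_abs_eigenvalues_sub hT _ hδ hE
    (WithLp.toLp 2 fun j : Λ => u j)
  simp only [EuclideanSpace.real_norm_sq_eq] at hle
  rw [← Finset.sum_coe_sort Λ, ← Finset.sum_coe_sort Λ]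
  refine hle.trans_eq (Finset.sum_congr rfl fun n _ => ?_)
  congr 1
  simp only [Matrix.toLpLin_apply, Real.ringHom_apply, PiLp.sub_apply, PiLp.smul_apply,
    compression_mulVec, schrodinger_apply, Subtype.coe_prop, indicator_of_mem, smul_eq_mul]
  ring

lemma hasSum_sum_Ico_int_mul_add {M : Type*} [AddCommMonoid M] [TopologicalSpace M]
    [ContinuousAdd M] [RegularSpace M] {f : ℤ → M} {s : M} (hf : HasSum f s) {q : ℕ} (hq : 0 < q)
    (a : ℤ) :
    HasSum (fun t : ℤ => ∑ n ∈ Finset.Ico a (a + q), f (t * q + n)) s := by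
  have : NeZero q := ⟨hq.ne'⟩
  have hprod : HasSum (fun z : ℤ × Fin q => f (z.1 * q + (a + z.2))) s := by
    have := (Int.divModEquiv q).symm.hasSum_iff.2 ((Equiv.addLeft a).hasSum_iff.2 hf)
    refine this.congr_fun fun z => congrArg f ?_
    simp [add_left_comm, Int.divModEquiv]
  have hfiber (t : ℤ) : ∑ r : Fin q, f (t * q + (a + r)) =
      ∑ n ∈ Finset.Ico a (a + q), f (t * q + n) := by
    rw [Fin.sum_univ_eq_sum_range fun r : ℕ => f (t * q + (a + r))]
    refine Finset.sum_nbij' (fun r => a + r) (fun n => (n - a).toNat) ?_ ?_ ?_ ?_ fun _ _ => rfl <;>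
      simp only [Finset.mem_range, Finset.mem_Ico] <;> lia
  simpa only [hfiber] using hprod.prod_fiberwise fun t => hasSum_fintype _

lemma schrodinger_comp_int_mul_add {V : ℤ → ℝ} {q : ℤ} (hV : Function.Periodic V q) (u : ℤ → ℝ)
    (t n : ℤ) : schrodinger V (fun j => u (t * q + j)) n = schrodinger V u (t * q + n) := by
  have hVn : V (t * q + n) = V n := by simpa [add_comm] using hV.int_mul t n
  simp only [schrodinger_apply, add_sub_assoc, add_assoc, hVn]

lemma HasGap.exists_hasSum_cut_le {V V₀ : ℤ → ℝ} {g : ℝ} (h : HasGap V₀ g) (hg : 0 < g) {q m : ℕ}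
    (hVq : Function.Periodic V q) (hq : 4 * m + 2 ≤ q) {c : ℤ}
    (hV : ∀ n ∈ Ico (c - 2 * m) (c + 2 * m), V n = V₀ n) {u : ℤ → ℝ} {U G : ℝ}
    (hU : HasSum (fun n => u n ^ 2) U) (hG : HasSum (fun n => schrodinger V u n ^ 2) G) :
    ∃ X, HasSum (fun t : ℤ => u (t * q + (c - 1)) ^ 2 + u (t * q + c) ^ 2) X ∧
      X ≤ (1 + g / 2)⁻¹ ^ m * U + 2 / g * G := by
  have hq0 : 0 < q := by lia
  have hbound := ((hasSum_sum_Ico_int_mul_add hU hq0 (c - 1 - 2 * m)).mul_left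
    ((1 + g / 2)⁻¹ ^ m)).add
      ((hasSum_sum_Ico_int_mul_add hG hq0 (c - 1 - 2 * m)).mul_left (2 / g))
  have hle (t : ℤ) : u (t * q + (c - 1)) ^ 2 + u (t * q + c) ^ 2 ≤
      (1 + g / 2)⁻¹ ^ m * ∑ n ∈ Finset.Ico (c - 1 - 2 * m) (c - 1 - 2 * m + q), u (t * q + n) ^ 2 +
        2 / g * ∑ n ∈ Finset.Ico (c - 1 - 2 * m) (c - 1 - 2 * m + q),
          schrodinger V u (t * q + n) ^ 2 := by
    have hdecay := h.sum_Ico_sq_le_pow_mul hg (show c - 1 ≤ c + 1 by lia) m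
      (fun n hn => hV n ⟨by linarith [hn.1], by linarith [hn.2]⟩) fun n => u (t * q + n)
    have hpair : Finset.Ico (c - 1) (c + 1) = {c - 1, c} := by
      ext n; simp only [Finset.mem_Ico, Finset.mem_insert, Finset.mem_singleton]; lia
    rw [hpair, Finset.sum_pair (by lia)] at hdecay
    simp only [schrodinger_comp_int_mul_add hVq u] at hdecay
    have hsub : Finset.Ico (c - 1 - 2 * m) (c + 1 + 2 * m) ⊆
        Finset.Ico (c - 1 - 2 * m) (c - 1 - 2 * m + q) := Finset.Ico_subset_Ico le_rfl (by lia)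
    refine hdecay.trans ?_
    gcongr
  obtain ⟨X, hX⟩ := Summable.of_nonneg_of_le (fun t => by positivity) hle hbound.summable
  exact ⟨X, hX, hasSum_le hle hX hbound⟩

lemma HasGap.of_compression {V V₀ : ℤ → ℝ} {g δ : ℝ} (h : HasGap V₀ g) (hg : 0 < g) {q m : ℕ}
    (hVq : Function.Periodic V q) (hq : 4 * m + 2 ≤ q) {c : ℤ}
    (hV : ∀ n ∈ Ico (c - 2 * m) (c + 2 * m), V n = V₀ n)
    (hcut : ∀ u : ℤ → ℝ, δ ^ 2 * ∑ n ∈ Finset.Ico c (c + q), u n ^ 2 ≤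
      ∑ n ∈ Finset.Ico c (c + q), schrodinger V ((Ico c (c + q)).indicator u) n ^ 2)
    (hδ : 8 * (1 + g / 2)⁻¹ ^ m ≤ δ ^ 2) :
    HasGap V (δ ^ 2 / (4 + 16 / g)) := by
  intro u U G hU hG
  have hq0 : 0 < q := by lia
  obtain ⟨X, hX, hXle⟩ := h.exists_hasSum_cut_le hg hVq hq hV hU hG
  have hblock (t : ℤ) : δ ^ 2 * ∑ n ∈ Finset.Ico c (c + q), u (t * q + n) ^ 2 ≤
      2 * ∑ n ∈ Finset.Ico c (c + q), schrodinger V u (t * q + n) ^ 2 +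
        (2 * (u (t * q + (c - 1)) ^ 2 + u (t * q + c) ^ 2) +
          2 * (u ((t + 1) * q + (c - 1)) ^ 2 + u ((t + 1) * q + c) ^ 2)) := by
    have hle := (hcut fun n => u (t * q + n)).trans
      (sum_Ico_schrodinger_indicator_sq_le V _ (by lia))
    simp only [schrodinger_comp_int_mul_add hVq u] at hle
    rw [show t * q + (c + q) = (t + 1) * q + c by ring] at hle
    linarith [sq_nonneg (u (t * q + c)), sq_nonneg (u ((t + 1) * q + (c - 1)))]
  have hsum := hasSum_le hblock
    ((hasSum_sum_Ico_int_mul_add hU hq0 c).mul_left (δ ^ 2))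
    (((hasSum_sum_Ico_int_mul_add hG hq0 c).mul_left 2).add
      ((hX.mul_left 2).add (((Equiv.addRight (1 : ℤ)).hasSum_iff.2 hX).mul_left 2)))
  have hU0 : 0 ≤ U := hU.nonneg fun _ => sq_nonneg _
  have hhalf : δ ^ 2 / 2 * U ≤ (2 + 8 / g) * G := by
    have := mul_le_mul_of_nonneg_right hδ hU0
    have h8 : 8 / g = 4 * (2 / g) := by ring
    rw [h8]
    linarith
  rw [div_mul_eq_mul_div, div_le_iff₀ (by positivity)]
  have h16 : 16 / g = 2 * (8 / g) := by ring
  rw [h16]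
  linarith

lemma isBounded_range_of_periodic {α : Type*} [PseudoMetricSpace α] {f : ℤ → α} {q : ℤ}
    (hf : Function.Periodic f q) (hq : 0 < q) : Bornology.IsBounded (range f) :=
  hf.image_Ioc hq 0 ▸ ((finite_Ioc _ _).image f).isBounded

/-- For energies at distance at least `δ = 3 κ^(m/2)`, `κ = (1 + g/2)⁻¹`, from the eigenvalues of
the operator on one period cut at `c`, the cut is a small perturbation. -/
lemma volume_setOf_hasGap_inter_schrodingerSpectrum_le {W W₀ : ℤ → ℝ} {g : ℝ} (hg : 0 < g)
    {q m : ℕ} (hWq : Function.Periodic W q) (hq : 4 * m + 2 ≤ q) {c : ℤ}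
    (hW : ∀ n ∈ Ico (c - 2 * m) (c + 2 * m), W n = W₀ n) :
    volume ({E | HasGap (fun n => W₀ n - E) g} ∩ SchrodingerSpectrum W) ≤
      q * ENNReal.ofReal (6 * √(1 + g / 2)⁻¹ ^ m) := by
  have hq0 : (0 : ℤ) < q := by lia
  set δ := 3 * √(1 + g / 2)⁻¹ ^ m with hδ
  have hδ0 : 0 < δ := by positivity
  have hδsq : 8 * (1 + g / 2)⁻¹ ^ m ≤ δ ^ 2 := by
    rw [hδ, mul_pow, ← pow_mul, mul_comm m, pow_mul, Real.sq_sqrt (by positivity)]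
    gcongr
    norm_num
  obtain ⟨ev, hev⟩ := exists_eigenvalues_compression W (Finset.Ico c (c + q))
  have hcover : {E | HasGap (fun n => W₀ n - E) g} ∩ SchrodingerSpectrum W ⊆
      ⋃ j, Metric.ball (ev j) δ := by
    rintro E ⟨hgap, hE⟩
    contrapose! hE
    simp only [mem_iUnion, Metric.mem_ball', Real.dist_eq, not_exists, not_lt] at hE
    refine (notMem_schrodingerSpectrum_iff (isBounded_range_of_periodic hWq hq0) E).2
      ⟨δ ^ 2 / (4 + 16 / g), by positivity, ?_⟩
    refine HasGap.of_compression hgap hg (fun n => by rw [hWq]) hq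
      (fun n hn => by rw [hW n hn]) (fun u => ?_) hδsq
    simpa only [Finset.coe_Ico] using hev E δ hδ0.le hE u
  calc volume ({E | HasGap (fun n => W₀ n - E) g} ∩ SchrodingerSpectrum W)
      ≤ ∑ j, volume (Metric.ball (ev j) δ) :=
        (measure_mono hcover).trans (measure_iUnion_fintype_le _ _)
    _ = q * ENNReal.ofReal (6 * √(1 + g / 2)⁻¹ ^ m) := by
        simp only [Real.volume_ball, Finset.sum_const, Finset.card_univ, Fintype.card_fin,
          Int.card_Ico, add_sub_cancel_left, Int.toNat_natCast, nsmul_eq_mul, hδ]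
        ring_nf

lemma volume_inter_schrodingerSpectrum_le {ι : Type*} [Fintype ι] {W : ℤ → ℝ} {W₀ : ι → ℤ → ℝ}
    {g : ℝ} (hg : 0 < g) {q m : ℕ} (hWq : Function.Periodic W q) (hq : 4 * m + 2 ≤ q) {c : ι → ℤ}
    (hW : ∀ i, ∀ n ∈ Ico (c i - 2 * m) (c i + 2 * m), W n = W₀ i n) {K : Set ℝ}
    (hK : ∀ E ∈ K, ∃ i, HasGap (fun n => W₀ i n - E) g) :
    volume (K ∩ SchrodingerSpectrum W) ≤
      ENNReal.ofReal (Fintype.card ι * (q * (6 * √(1 + g / 2)⁻¹ ^ m))) := by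
  have hcover : K ∩ SchrodingerSpectrum W ⊆
      ⋃ i, {E | HasGap (fun n => W₀ i n - E) g} ∩ SchrodingerSpectrum W := by
    rintro E ⟨hEK, hE⟩
    obtain ⟨i, hi⟩ := hK E hEK
    exact mem_iUnion.2 ⟨i, hi, hE⟩
  calc volume (K ∩ SchrodingerSpectrum W)
      ≤ ∑ i, volume ({E | HasGap (fun n => W₀ i n - E) g} ∩ SchrodingerSpectrum W) :=
        (measure_mono hcover).trans (measure_iUnion_fintype_le _ _)
    _ ≤ ∑ _ : ι, q * ENNReal.ofReal (6 * √(1 + g / 2)⁻¹ ^ m) :=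
        Finset.sum_le_sum fun i _ =>
          volume_setOf_hasGap_inter_schrodingerSpectrum_le hg hWq hq (hW i)
    _ = ENNReal.ofReal (Fintype.card ι * (q * (6 * √(1 + g / 2)⁻¹ ^ m))) := by
        rw [Finset.sum_const, Finset.card_univ, nsmul_eq_mul,
          ENNReal.ofReal_mul (Nat.cast_nonneg _), ENNReal.ofReal_mul (Nat.cast_nonneg _),
          ENNReal.ofReal_natCast, ENNReal.ofReal_natCast]

lemma eventually_hasGap {W : ℤ → ℝ} (hW : Bornology.IsBounded (range W)) {E lam : ℝ}
    (hE : E ∉ SchrodingerSpectrum fun n => lam * W n) :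
    ∃ g > 0, ∀ᶠ z : ℝ × ℝ in nhds (E, lam), HasGap (fun n => z.2 * W n - z.1) g := by
  have hlamW : Bornology.IsBounded (range fun n => lam * W n) := by
    simpa only [← range_comp] using! (lipschitzWith_smul lam).isBounded_image hW
  obtain ⟨g, hg, hgap⟩ := (notMem_schrodingerSpectrum_iff hlamW E).1 hE
  obtain ⟨B, hB⟩ := isBounded_iff_forall_norm_le.1 hW
  have hcont : Continuous fun z : ℝ × ℝ => |lam - z.2| * B + |E - z.1| := by fun_prop
  have hnear : ∀ᶠ z : ℝ × ℝ in nhds (E, lam), |lam - z.2| * B + |E - z.1| < √g / 2 :=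
    hcont.continuousAt.eventually (eventually_lt_nhds (by simp [hg]))
  refine ⟨g / 4, by positivity, hnear.mono fun z hz => hgap.perturb (s := √g / 2) (fun n => ?_) ?_⟩
  · calc |lam * W n - E - (z.2 * W n - z.1)|
        = |(lam - z.2) * W n - (E - z.1)| := by ring_nf
      _ ≤ |lam - z.2| * |W n| + |E - z.1| := by rw [← abs_mul]; exact abs_sub _ _
      _ ≤ |lam - z.2| * B + |E - z.1| := by gcongr; exact hB _ (mem_range_self n)
      _ ≤ √g / 2 := hz.le
  · rw [div_pow, Real.sq_sqrt hg.le]; linarith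

/-! ### Splicing approximants -/

lemma agg_congr {k : ℕ} {x y : ℤ → Fin k → ℝ} {n : ℤ} (h : x (n / k) = y (n / k)) :
    agg k x n = agg k y n := by
  simp only [agg, Int.fdiv_eq_ediv_of_nonneg n (Int.natCast_nonneg k), h]

lemma agg_smul {k : ℕ} (y : ℤ → Fin k → ℝ) (lam : ℝ) (n : ℤ) :
    agg k (fun j => lam • y j) n = lam * agg k y n := by
  unfold agg
  split_ifs <;> simp

lemma isBounded_range_agg {k : ℕ} {y : ℤ → Fin k → ℝ} (hy : Bornology.IsBounded (range y)) :
    Bornology.IsBounded (range (agg k y)) := by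
  obtain ⟨B, hB⟩ := isBounded_iff_forall_norm_le.1 hy
  refine isBounded_iff_forall_norm_le.2 ⟨B, forall_mem_range.2 fun n => ?_⟩
  unfold agg
  split_ifs
  · exact (norm_le_pi_norm (y _) _).trans (hB _ (mem_range_self _))
  · simpa using (norm_nonneg _).trans (hB _ (mem_range_self 0))

lemma agg_periodic {k : ℕ} {y : ℤ → Fin k → ℝ} {P : ℤ} (h : Function.Periodic y P) :
    Function.Periodic (agg k y) (P * k) := by
  intro n
  unfold agg
  split_ifs with hk
  · have hk0 : (k : ℤ) ≠ 0 := by exact_mod_cast hk.ne'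
    simp only [Int.fdiv_eq_ediv_of_nonneg _ (Int.natCast_nonneg k),
      Int.add_mul_ediv_right _ _ hk0, Int.add_mul_emod_self_right, h _]
  · rfl

lemma perExt_mem {α : Type*} [Zero α] {m : ℕ} (hm : 0 < m) {s : Set α} {w : Fin m → α}
    (hw : ∀ i, w i ∈ s) (n : ℤ) : perExt w n ∈ s := by
  simp only [perExt, dif_pos hm, hw]

lemma apply_emod_of_periodic {α : Type*} {f : ℤ → α} {q : ℤ} (hf : Function.Periodic f q) (n : ℤ) :
    f (n % q) = f n := by
  simpa [Int.emod_def, mul_comm] using hf.sub_int_mul_eq (x := n) (n / q)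

lemma perExt_of_periodic {α : Type*} [Zero α] {p : ℕ} (hp : 0 < p) {x : ℤ → α}
    (hx : Function.Periodic x p) : perExt (fun i : Fin p => x i) = x := by
  ext n
  have hp0 : (p : ℤ) ≠ 0 := by exact_mod_cast hp.ne'
  simp only [perExt, dif_pos hp, Int.toNat_of_nonneg (Int.emod_nonneg n hp0),
    apply_emod_of_periodic hx]

/-- The sequences over the alphabet `Y` that are uniformly `ε`-close to `x`. -/
def approximants {α : Type*} [PseudoMetricSpace α] (Y : Set α) (x : ℤ → α) (ε : ℝ) :
    Set (ℤ → α) :=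
  {y | (∀ j, y j ∈ Y) ∧ ∀ j, dist (x j) (y j) < ε}

lemma isBounded_range_of_mem_approximants {α : Type*} [PseudoMetricSpace α] {Y : Set α}
    {x y : ℤ → α} {ε : ℝ} (hx : Bornology.IsBounded (range x)) (hy : y ∈ approximants Y x ε) :
    Bornology.IsBounded (range y) :=
  (hx.thickening (δ := ε)).subset <| range_subset_iff.2 fun j =>
    Metric.mem_thickening_iff.2 ⟨x j, mem_range_self j, by simpa only [dist_comm] using hy.2 j⟩

lemma GapRich.exists_mem_approximants {k : ℕ} {S : Set ℝ} {Y : Set (Fin k → ℝ)} {lam : ℝ}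
    (h : GapRich k ((fun w => lam • w) '' Y) S) (hlam : lam ≠ 0) {x : ℤ → Fin k → ℝ}
    (hxY : ∀ j, x j ∈ Y) {p : ℕ} (hp : 0 < p) (hx : Function.Periodic x p) {ε : ℝ}
    (hε : 0 < ε) {E : ℝ} (hE : E ∉ S) :
    ∃ y ∈ approximants Y x ε, E ∉ SchrodingerSpectrum fun n => lam * agg k y n := by
  have hlam0 : 0 < ‖lam‖ := norm_pos_iff.2 hlam
  obtain ⟨l, hl, w, hwY, hdist, hspec⟩ := h.2 E hE p hp (fun i => lam • x i)
    (fun i => mem_image_of_mem _ (hxY i)) (‖lam‖ * ε) (by positivity)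
  have hw : perExt w = fun j => lam • lam⁻¹ • perExt w j := by
    ext1 j; rw [smul_inv_smul₀ hlam]
  refine ⟨fun j => lam⁻¹ • perExt w j, ⟨fun j => ?_, fun j => ?_⟩, ?_⟩
  · obtain ⟨v, hvY, hv⟩ := perExt_mem hl hwY j
    simpa only [← hv, inv_smul_smul₀ hlam] using hvY
  · have hj := hdist j
    rw [perExt_of_periodic hp (x := fun j => lam • x j) (hx.comp (lam • ·)), congr_fun hw j,
      dist_smul₀] at hj
    exact lt_of_mul_lt_mul_left hj hlam0.le
  · rw [hw] at hspec
    have hagg := funext (agg_smul (fun j => lam⁻¹ • perExt w j) lam)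
    rwa [hagg] at hspec

lemma exists_list_hasGap {k : ℕ} {A : Set (ℤ → Fin k → ℝ)}
    (hA : ∀ y ∈ A, Bornology.IsBounded (range y)) {K Z : Set ℝ} (hK : IsCompact K)
    (hZ : IsCompact Z)
    (hgap : ∀ E ∈ K, ∀ lam ∈ Z, ∃ y ∈ A, E ∉ SchrodingerSpectrum fun n => lam * agg k y n) :
    ∃ l : List (ℤ → Fin k → ℝ), (∀ y ∈ l, y ∈ A) ∧ ∃ g > 0, ∀ E ∈ K, ∀ lam ∈ Z, ∃ y ∈ l,
      HasGap (fun n => lam * agg k y n - E) g := by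
  suffices h : ∃ l : List (ℤ → Fin k → ℝ), (∀ y ∈ l, y ∈ A) ∧ ∃ g > 0, ∀ z ∈ K ×ˢ Z, ∃ y ∈ l,
      HasGap (fun n => z.2 * agg k y n - z.1) g by
    obtain ⟨l, hl, g, hg, h⟩ := h
    exact ⟨l, hl, g, hg, fun E hE lam hlam => h (E, lam) ⟨hE, hlam⟩⟩
  refine (hK.prod hZ).induction_on ⟨[], by simp, 1, one_pos, by simp⟩ ?_ ?_ ?_
  · rintro s t hst ⟨l, hl, g, hg, h⟩
    exact ⟨l, hl, g, hg, fun z hz => h z (hst hz)⟩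
  · rintro s t ⟨l, hl, g, hg, h⟩ ⟨l', hl', g', hg', h'⟩
    refine ⟨l ++ l', fun y hy => (List.mem_append.1 hy).elim (hl y) (hl' y), min g g',
      lt_min hg hg', ?_⟩
    rintro z (hz | hz)
    · obtain ⟨y, hy, hgap⟩ := h z hz
      exact ⟨y, List.mem_append_left _ hy, hgap.mono (min_le_left _ _)⟩
    · obtain ⟨y, hy, hgap⟩ := h' z hz
      exact ⟨y, List.mem_append_right _ hy, hgap.mono (min_le_right _ _)⟩
  · rintro ⟨E, lam⟩ ⟨hE, hlam⟩
    obtain ⟨y, hy, hspec⟩ := hgap E hE lam hlam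
    obtain ⟨g, hg, hnear⟩ := eventually_hasGap (isBounded_range_agg (hA y hy)) hspec
    exact ⟨_, mem_nhdsWithin_of_mem_nhds hnear, [y], by simpa using hy, g, hg, by simp⟩

/-- The `P`-periodic sequence which on `[0, P)` follows the members of `l` in turn, each on a
stretch of length `ℓ`, and then follows `x`. For `ℓ = 0`, where the division gives `0`, it
follows the head of `l` throughout. -/
def splice {α : Type*} (l : List (ℤ → α)) (x : ℤ → α) (P ℓ : ℕ) (j : ℤ) : α :=
  l.getD ((j % P) / ℓ).toNat x (j % P)

lemma splice_periodic {α : Type*} (l : List (ℤ → α)) (x : ℤ → α) (P ℓ : ℕ) :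
    Function.Periodic (splice l x P ℓ) P := fun j => by
  simp only [splice, Int.add_emod_right]

lemma exists_splice_eq {α : Type*} (l : List (ℤ → α)) (x : ℤ → α) (P ℓ : ℕ) (j : ℤ) :
    ∃ y ∈ x :: l, splice l x P ℓ j = y (j % P) := by
  refine ⟨l.getD ((j % P) / ℓ).toNat x, ?_, rfl⟩
  rcases lt_or_ge ((j % P) / ℓ).toNat l.length with h | h
  · rw [List.getD_eq_getElem _ _ h]; exact List.mem_cons_of_mem _ (List.getElem_mem h)
  · rw [List.getD_eq_default _ _ h]; exact List.mem_cons_self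

lemma splice_eq_getElem {α : Type*} (l : List (ℤ → α)) (x : ℤ → α) {P ℓ i : ℕ}
    (hi : i < l.length) (hP : (i + 1) * ℓ ≤ P) {j : ℤ} (hj : j ∈ Ico (i * ℓ : ℤ) ((i + 1) * ℓ)) :
    splice l x P ℓ j = l[i] j := by
  have hℓ : (0 : ℤ) < ℓ := by linarith [hj.1, hj.2]
  have hdiv : j / ℓ = i := le_antisymm (Int.lt_add_one_iff.1 (Int.ediv_lt_of_lt_mul hℓ hj.2))
    (Int.le_ediv_of_mul_le hℓ hj.1)
  have hjP : j < P := hj.2.trans_le (by exact_mod_cast hP)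
  have hmod : j % P = j := Int.emod_eq_of_lt (le_trans (by positivity) hj.1) hjP
  rw [splice, hmod, hdiv, Int.toNat_natCast, List.getD_eq_getElem _ _ hi]

lemma splice_mem_approximants {α : Type*} [PseudoMetricSpace α] {Y : Set α} {x : ℤ → α} {ε : ℝ}
    {l : List (ℤ → α)} (hl : ∀ y ∈ x :: l, y ∈ approximants Y x ε) {P : ℕ}
    (hx : Function.Periodic x P) (ℓ : ℕ) : splice l x P ℓ ∈ approximants Y x ε := by
  refine ⟨fun j => ?_, fun j => ?_⟩ <;>
    obtain ⟨y, hy, hyj⟩ := exists_splice_eq l x P ℓ j <;> rw [hyj]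
  · exact (hl y hy).1 _
  · rw [← apply_emod_of_periodic hx]
    exact (hl y hy).2 _

lemma volume_inter_schrodingerSpectrum_splice_le {k : ℕ} (hk : 0 < k) (l : List (ℤ → Fin k → ℝ))
    (x : ℤ → Fin k → ℝ) {P m : ℕ} (hP : l.length * (4 * m) ≤ P) (hm : 4 * m + 2 ≤ P * k) {g : ℝ}
    (hg : 0 < g) {lam : ℝ} {K : Set ℝ}
    (hK : ∀ E ∈ K, ∃ y ∈ l, HasGap (fun n => lam * agg k y n - E) g) :
    volume (K ∩ SchrodingerSpectrum fun n => lam * agg k (splice l x P (4 * m)) n) ≤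
      ENNReal.ofReal (l.length * ((P * k : ℕ) * (6 * √(1 + g / 2)⁻¹ ^ m))) := by
  have hper : Function.Periodic (fun n => lam * agg k (splice l x P (4 * m)) n) (P * k : ℕ) :=
    by
    rw [Nat.cast_mul]
    exact (agg_periodic (splice_periodic l x P (4 * m))).comp (lam * ·)
  have hk0 : (0 : ℤ) < k := by exact_mod_cast hk
  have hwindow (i : Fin l.length) (n : ℤ) (hn : n ∈ Ico (4 * m * i * k + 2 * m - 2 * m : ℤ)
      (4 * m * i * k + 2 * m + 2 * m)) :
      lam * agg k (splice l x P (4 * m)) n = lam * agg k l[i] n := by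
    rw [agg_congr (splice_eq_getElem l x i.2 ((Nat.mul_le_mul_right _ i.2).trans hP) ⟨?_, ?_⟩)]
    · rfl
    · refine Int.le_ediv_of_mul_le hk0 ?_
      push_cast
      linarith [hn.1]
    · refine Int.ediv_lt_of_lt_mul hk0 ?_
      push_cast
      nlinarith [hn.2]
  have hgap (E : ℝ) (hE : E ∈ K) :
      ∃ i : Fin l.length, HasGap (fun n => lam * agg k l[i] n - E) g := by
    obtain ⟨y, hy, hyE⟩ := hK E hE
    obtain ⟨i, hi, rfl⟩ := List.getElem_of_mem hy
    exact ⟨⟨i, hi⟩, hyE⟩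
  simpa only [Fintype.card_fin] using
    volume_inter_schrodingerSpectrum_le hg hper hm hwindow hgap

lemma exists_eventually_mul_pow_div_le_exp {C θ : ℝ} (hC : 0 ≤ C) (hθ0 : 0 < θ) (hθ1 : θ < 1)
    {L : ℕ} (hL : 0 < L) :
    ∃ c > 0, ∀ᶠ N : ℕ in Filter.atTop, C * N * θ ^ (N / L) ≤ Real.exp (-(c * N)) := by
  have hlog : 0 < -Real.log θ := neg_pos.2 (Real.log_neg hθ0 hθ1)
  set c := -Real.log θ / (2 * L) with hc
  have hc0 : 0 < c := by positivity
  set r := Real.exp (-c)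
  have hr1 : r < 1 := Real.exp_lt_one_iff.2 (neg_lt_zero.2 hc0)
  have hrθ : r ^ (2 * L) = θ := by
    rw [← Real.exp_nat_mul, ← Real.exp_log hθ0, hc]
    congr 1
    push_cast
    field_simp
  have hpow (N : ℕ) : θ ^ (N / L) ≤ θ⁻¹ * (r ^ N * r ^ N) := by
    have hN : 2 * N ≤ 2 * L * (N / L + 1) := by
      have := Nat.lt_mul_div_succ N hL
      lia
    rw [le_inv_mul_iff₀ hθ0, ← pow_succ', ← pow_add, ← two_mul]
    calc θ ^ (N / L + 1) = r ^ (2 * L * (N / L + 1)) := by rw [pow_mul, hrθ]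
      _ ≤ r ^ (2 * N) := pow_le_pow_of_le_one (Real.exp_nonneg _) hr1.le hN
  have hlim := ((tendsto_self_mul_const_pow_of_lt_one (Real.exp_nonneg _) hr1).const_mul
    (C * θ⁻¹))
  refine ⟨c, hc0, ?_⟩
  filter_upwards [hlim.eventually (eventually_le_nhds (b := 1) (by simp))] with N hN
  calc C * N * θ ^ (N / L) ≤ C * N * (θ⁻¹ * (r ^ N * r ^ N)) := by gcongr; exact hpow N
    _ = C * θ⁻¹ * (N * r ^ N) * r ^ N := by ring
    _ ≤ 1 * r ^ N := by gcongr
    _ = Real.exp (-(c * N)) := by rw [one_mul, ← Real.exp_nat_mul]; congr 1; ring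

theorem thin_spectrum_periodic_coupling_general (k : ℕ) (hk : 0 < k) (Y : Set (Fin k → ℝ))
    (Z : Set ℝ) (hZ : IsCompact Z) (x : ℤ → Fin k → ℝ) (hxY : ∀ j, x j ∈ Y)
    (p : ℕ) (hp : 0 < p) (hx : Function.Periodic x p) (ε : ℝ) (hε : 0 < ε)
    (K : Set ℝ) (hK : IsCompact K)
    (hgap : ∀ E ∈ K, ∀ lam ∈ Z, ∃ y ∈ approximants Y x ε,
      E ∉ SchrodingerSpectrum fun n => lam * agg k y n) :
    ∃ N₀ : ℕ, ∃ c₀ : ℝ, 0 < c₀ ∧ ∀ N : ℕ, N₀ ≤ N →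
      ∃ y ∈ approximants Y x ε, Function.Periodic y (N * p : ℕ) ∧ ∀ lam ∈ Z,
        volume (K ∩ SchrodingerSpectrum fun n => lam * agg k y n) ≤
          ENNReal.ofReal (Real.exp (-(c₀ * N))) := by
  have hxbdd := isBounded_range_of_periodic hx (by exact_mod_cast hp)
  obtain ⟨l, hl, g, hg, hlgap⟩ := exists_list_hasGap
    (fun _ => isBounded_range_of_mem_approximants hxbdd) hK hZ hgap
  have hl_cons : ∀ y ∈ x :: l, y ∈ approximants Y x ε :=
    List.forall_mem_cons.2 ⟨⟨hxY, by simpa using hε⟩, hl⟩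
  have hθ : √(1 + g / 2)⁻¹ < 1 := by
    rw [Real.sqrt_lt' one_pos, one_pow]
    exact inv_lt_one_of_one_lt₀ (by linarith)
  obtain ⟨c₀, hc₀, hrate⟩ := exists_eventually_mul_pow_div_le_exp (C := l.length * (p * k * 6))
    (by positivity) (Real.sqrt_pos.2 (by positivity)) hθ (L := 4 * (l.length + 2)) (by positivity)
  obtain ⟨N₀, hN₀⟩ := (hrate.and (Filter.eventually_ge_atTop 2)).exists_forall_of_atTop
  refine ⟨N₀, c₀, hc₀, fun N hN => ?_⟩
  obtain ⟨hexp, hN2⟩ := hN₀ N hN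
  set m := N / (4 * (l.length + 2))
  have hm : (l.length + 2) * (4 * m) ≤ N := by
    calc (l.length + 2) * (4 * m) = 4 * (l.length + 2) * m := by ring
      _ ≤ N := Nat.mul_div_le N _
  have hNp : N ≤ N * p := Nat.le_mul_of_pos_right N hp
  have hNpk : N * p ≤ N * p * k := Nat.le_mul_of_pos_right _ hk
  refine ⟨splice l x (N * p) (4 * m), splice_mem_approximants hl_cons ?_ _,
    splice_periodic l x (N * p) (4 * m), fun lam hlam => ?_⟩
  · simpa using hx.nat_mul N
  refine (volume_inter_schrodingerSpectrum_splice_le hk l x (by nlinarith) ?_ hg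
    fun E hE => hlgap E hE lam hlam).trans (ENNReal.ofReal_le_ofReal (hexp.trans' (le_of_eq ?_)))
  · have : 8 * m ≤ N := by nlinarith
    lia
  · push_cast
    ring

/-- Thin spectra for periodic approximants, uniformly in a compact set `Z` of
coupling constants: if `λY` is gap-rich with exceptional set `S` for all
`λ ∈ Z`, then any periodic `x` of minimal period `p` can be `ε`-approximated by
`Np`-periodic `y` with `Leb(K ∩ σ(H_{λy})) ≤ e^{-c₀N}` for all `λ ∈ Z` and all
large `N`, for compact `K ⊆ ℝ∖S`. -/
theorem thin_spectrum_periodic_coupling (k : ℕ) (hk : 0 < k)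
    (S : Set ℝ) (hS : IsDiscreteSet S)
    (Y : Set (Fin k → ℝ)) (hY : Perfect Y)
    (Z : Set ℝ) (hZ0 : ∀ lam ∈ Z, lam ≠ 0) (hZc : IsCompact Z)
    (hGR : ∀ lam ∈ Z, GapRich k ((fun w => lam • w) '' Y) S)
    (x : ℤ → (Fin k → ℝ)) (hxY : ∀ j, x j ∈ Y)
    (p : ℕ) (hp : 0 < p) (hper : ∀ j : ℤ, x (j + (p : ℤ)) = x j)
    (hmin : ∀ q : ℕ, 0 < q → (∀ j : ℤ, x (j + (q : ℤ)) = x j) → p ≤ q)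
    (ε : ℝ) (hε : 0 < ε) (K : Set ℝ) (hKc : IsCompact K) (hKS : K ⊆ Sᶜ) :
    ∃ N₀ : ℕ, ∃ c₀ : ℝ, 0 < c₀ ∧
      ∀ N : ℕ, N₀ ≤ N →
        ∃ y : ℤ → (Fin k → ℝ),
          (∀ j, y j ∈ Y) ∧
          (∀ j : ℤ, y (j + ((N * p : ℕ) : ℤ)) = y j) ∧
          (∀ j : ℤ, dist (x j) (y j) < ε) ∧
          ∀ lam ∈ Z,
            volume (K ∩ SchrodingerSpectrum (fun n => lam * agg k y n)) ≤
              ENNReal.ofReal (Real.exp (-(c₀ * N))) := by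
  obtain ⟨N₀, c₀, hc₀, h⟩ := thin_spectrum_periodic_coupling_general k hk Y Z hZc x hxY p hp hper ε
    hε K hKc fun E hE lam hlam =>
      (hGR lam hlam).exists_mem_approximants (hZ0 lam hlam) hxY hp hper hε (hKS hE)
  refine ⟨N₀, c₀, hc₀, fun N hN => ?_⟩
  obtain ⟨y, ⟨hyY, hyx⟩, hy, hvol⟩ := h N hN
  exact ⟨y, hyY, hy, hyx, hvol⟩
end
end

section
/- Let Y ⊆ ℝ^k be a closed perfect set. For any x ∈ LP(ℤ,Y) (a limit-periodic Y-valued sequence), the spectrum of the discrete Schrödinger operator H_x has no isolated points. -/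
/-!
The real spectrum of `H_x` is that of the complexified operator, to which the continuous functional
calculus applies. If `E` is isolated in the spectrum, it yields a bounded generalized inverse `B` of
`A = H_x - E`, that is `A B A = A`. So `E` is an eigenvalue, and a family `g_p` with `A g_p → 0` is
asymptotic to a family of eigenvectors, namely `g_p - B A g_p`.

A limit-periodic potential is a uniform limit of its own translates by suitable `p` with
`|p| → ∞`. Along such `p` the translates `g_p` of an eigenvector `f ≠ 0` satisfy `A g_p → 0`, hence
are asymptotic to eigenvectors `u_p`. Since `f ∈ ℓ²`, the values of `g_p`, and so those of `u_p`, at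
`0` and `1` tend to zero. These two values determine an eigenvector, so on the finite-dimensional
eigenspace they control the norm, and `u_p → 0`. Then `g_p → 0`, although `‖g_p‖ = ‖f‖`.
-/

open Set MeasureTheory BoundedContinuousFunction

noncomputable section

open Filter Topology
open scoped lp ENNReal

/-- Inverting on the spectrum minus an isolated point, with `0⁻¹ = 0` at the point itself, is
continuous on the spectrum, so the functional calculus applies. -/
theorem exists_commute_mul_mul_eq_of_not_accPt {𝕜 A : Type*} {p : A → Prop} [RCLike 𝕜] [Ring A]
    [StarRing A] [TopologicalSpace A] [Algebra 𝕜 A] [ContinuousFunctionalCalculus 𝕜 A p]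
    {a : A} (ha : p a) {z : 𝕜} (hz : ¬AccPt z (𝓟 (spectrum 𝕜 a))) :
    ∃ b, Commute (a - algebraMap 𝕜 A z) b ∧
      (a - algebraMap 𝕜 A z) * b * (a - algebraMap 𝕜 A z) = a - algebraMap 𝕜 A z := by
  have hinv : ContinuousOn (fun x => (x - z)⁻¹) (spectrum 𝕜 a) := by
    intro x _
    rcases eq_or_ne x z with rfl | hxz
    · have hpure : 𝓝[spectrum 𝕜 a] x ≤ pure x := by
        rw [accPt_iff_frequently, not_frequently] at hz
        rw [le_pure_iff, mem_nhdsWithin_iff_eventually]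
        filter_upwards [hz] with y hy hys
        by_contra hyx
        exact hy ⟨hyx, hys⟩
      exact (tendsto_pure_nhds _ x).mono_left hpure
    · exact ContinuousAt.continuousWithinAt (by fun_prop (disch := exact sub_ne_zero.2 hxz))
  have hsub : cfc (fun x => x - z) a = a - algebraMap 𝕜 A z := by
    rw [cfc_sub (fun x => x) (fun _ => z) a, cfc_id' 𝕜 a, cfc_const z a]
  refine ⟨cfc (fun x => (x - z)⁻¹) a, hsub ▸ cfc_commute_cfc _ _ a, ?_⟩
  rw [← hsub, ← cfc_mul (fun x => x - z) _ a, ← cfc_mul _ (fun x => x - z) a]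
  exact cfc_congr fun x _ => mul_inv_mul_cancel (x - z)

theorem mem_spectrum_iff_not_bijective {R 𝕜 V : Type*} [CommRing R] [NontriviallyNormedField 𝕜]
    [NormedAddCommGroup V] [NormedSpace 𝕜 V] [CompleteSpace V] [Module R V] [SMulCommClass 𝕜 R V]
    [ContinuousConstSMul R V] [SMul R 𝕜] [IsScalarTower R 𝕜 V] {T : V →L[𝕜] V} {r : R} :
    r ∈ spectrum R T ↔ ¬Function.Bijective fun f => T f - r • f := by
  rw [spectrum.mem_iff, IsUnit.sub_iff, ContinuousLinearMap.isUnit_iff_bijective]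
  rfl

section SelfAdjoint

variable {V : Type*} [NormedAddCommGroup V] [InnerProductSpace ℂ V] [CompleteSpace V]
  {T : V →L[ℂ] V} {E : ℝ}

theorem exists_eigenvector_of_not_accPt_spectrum (hT : IsSelfAdjoint T) (hE : E ∈ spectrum ℝ T)
    (hacc : ¬AccPt E (𝓟 (spectrum ℝ T))) : ∃ f ≠ 0, T f = E • f := by
  obtain ⟨B, hcomm, hB⟩ := exists_commute_mul_mul_eq_of_not_accPt hT hacc
  by_contra! hker
  have hinj : Function.Injective (T - algebraMap ℝ (V →L[ℂ] V) E) := by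
    refine (injective_iff_map_eq_zero _).2 fun f hf => ?_
    by_contra hf0
    exact hker f hf0 (sub_eq_zero.1 hf)
  have hBA : B * (T - algebraMap ℝ _ E) = 1 := by
    ext f
    exact hinj congr($hB f)
  exact hE (IsUnit.sub_iff.1 ⟨⟨_, B, hcomm.eq.trans hBA, hBA⟩, rfl⟩)

theorem exists_eigenvectors_tendsto_sub {ι : Type*} {l : Filter ι} {g : ι → V}
    (hT : IsSelfAdjoint T) (hacc : ¬AccPt E (𝓟 (spectrum ℝ T)))
    (hg : Tendsto (fun i => T (g i) - E • g i) l (𝓝 0)) :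
    ∃ u : ι → V, (∀ i, T (u i) = E • u i) ∧ Tendsto (fun i => g i - u i) l (𝓝 0) := by
  obtain ⟨B, -, hB⟩ := exists_commute_mul_mul_eq_of_not_accPt hT hacc
  refine ⟨fun i => g i - B (T (g i) - E • g i), fun i => ?_, ?_⟩
  · have hABA : T (B (T (g i) - E • g i)) - E • B (T (g i) - E • g i) = T (g i) - E • g i :=
      congr($hB (g i))
    rw [map_sub, smul_sub, sub_eq_sub_iff_sub_eq_sub, hABA]
  · simpa only [sub_sub_cancel, map_zero, Function.comp_def] using (B.continuous.tendsto 0).comp hg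

end SelfAdjoint

section LpSpace

variable {α β : Type*} {p : ℝ≥0∞}

theorem memℓp_comp_injective {F : Type*} [NormedAddCommGroup F] {f : β → F} (hf : Memℓp f p)
    {e : α → β} (he : Function.Injective e) : Memℓp (f ∘ e) p := by
  obtain rfl | rfl | hp := p.trichotomy
  · exact memℓp_zero (hf.finite_dsupport.preimage he.injOn)
  · exact memℓp_infty (hf.bddAbove.mono (range_comp_subset_range e fun b => ‖f b‖))
  · exact memℓp_gen ((hf.summable hp).comp_injective he)

/-- Reindexing `f ↦ f ∘ e` as a linear isometry equivalence. -/
def lpReindex (𝕜 F : Type*) [NormedAddCommGroup F] [NormedField 𝕜] [NormedSpace 𝕜 F] (p : ℝ≥0∞)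
    [Fact (1 ≤ p)] (e : α ≃ β) : ℓ^p(β, F) ≃ₗᵢ[𝕜] ℓ^p(α, F) where
  toFun f := ⟨f ∘ e, memℓp_comp_injective (lp.memℓp f) e.injective⟩
  invFun f := ⟨f ∘ e.symm, memℓp_comp_injective (lp.memℓp f) e.symm.injective⟩
  map_add' _ _ := rfl
  map_smul' _ _ := rfl
  left_inv f := by ext; simp
  right_inv f := by ext; simp
  norm_map' f := by
    obtain rfl | hp := p.dichotomy
    · exact e.iSup_congr fun _ => rfl
    · have hp0 := zero_lt_one.trans_le hp
      rw [lp.norm_eq_tsum_rpow hp0, lp.norm_eq_tsum_rpow hp0]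
      exact congr($(e.tsum_eq fun b => ‖f b‖ ^ p.toReal) ^ (1 / p.toReal))

theorem lp_tendsto_norm_cofinite_zero {F : α → Type*} [∀ i, NormedAddCommGroup (F i)]
    (hp0 : p ≠ 0) (hp : p ≠ ∞) (f : lp F p) : Tendsto (fun i => ‖f i‖) cofinite (𝓝 0) := by
  have hpos := ENNReal.toReal_pos hp0 hp
  have h := ((lp.memℓp f).summable hpos).tendsto_cofinite_zero.rpow_const
    (p := p.toReal⁻¹) (.inr (inv_nonneg.2 hpos.le))
  simpa [hpos.ne', Real.rpow_rpow_inv, Real.zero_rpow] using h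

/-- Splitting a complex `ℓ^p` function into its real and imaginary parts. -/
def lpComplexEquiv : ℓ^p(α, ℂ) ≃ ℓ^p(α, ℝ) × ℓ^p(α, ℝ) where
  toFun f := (⟨fun i => (f i).re, (lp.memℓp f).mono' fun i => Complex.abs_re_le_norm (f i)⟩,
    ⟨fun i => (f i).im, (lp.memℓp f).mono' fun i => Complex.abs_im_le_norm (f i)⟩)
  invFun f := ⟨fun i => ⟨f.1 i, f.2 i⟩, ((lp.memℓp f.1).norm.add (lp.memℓp f.2).norm).mono fun _ =>
    Complex.norm_le_abs_re_add_abs_im _⟩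
  left_inv _ := rfl
  right_inv _ := rfl

end LpSpace

section SchrodingerOperator

variable (𝕜 : Type*) [RCLike 𝕜] (p : ℤ) (W : ℤ →ᵇ ℝ)

/-- The unitary `f ↦ f (· + p)` of `ℓ²(ℤ)`. -/
def shift : ℓ²(ℤ, 𝕜) ≃ₗᵢ[𝕜] ℓ²(ℤ, 𝕜) := lpReindex 𝕜 𝕜 2 (Equiv.addRight p)

@[simp] theorem shift_apply (f : ℓ²(ℤ, 𝕜)) (n : ℤ) : shift 𝕜 p f n = f (n + p) := rfl

theorem shift_symm : (shift 𝕜 p).symm = shift 𝕜 (-p) := by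
  ext f n
  rfl

/-- Multiplication by a bounded real sequence on `ℓ²(ℤ)`. -/
def mulOp : ℓ²(ℤ, 𝕜) →L[𝕜] ℓ²(ℤ, 𝕜) :=
  lp.mapCLM 2 (fun n => (W n : 𝕜) • ContinuousLinearMap.id 𝕜 𝕜) (K := ‖W‖) (norm_nonneg W)
    fun n => by simpa [norm_smul] using W.norm_coe_le_norm n

@[simp] theorem mulOp_apply (f : ℓ²(ℤ, 𝕜)) (n : ℤ) : mulOp 𝕜 W f n = W n * f n := rfl

theorem norm_mulOp_le : ‖mulOp 𝕜 W‖ ≤ ‖W‖ := lp.norm_mapCLM_le ..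

theorem isSelfAdjoint_mulOp : IsSelfAdjoint (mulOp 𝕜 W) := by
  refine ContinuousLinearMap.isSelfAdjoint_iff_isSymmetric.2 fun f g => ?_
  simp_rw [lp.inner_eq_tsum]
  refine tsum_congr fun n => ?_
  simp [mul_left_comm, mul_assoc]

/-- The discrete Schrödinger operator `Δ + W` on `ℓ²(ℤ)`. -/
def schrodingerOp : ℓ²(ℤ, 𝕜) →L[𝕜] ℓ²(ℤ, 𝕜) := shift 𝕜 (-1) + shift 𝕜 1 + mulOp 𝕜 W

theorem schrodingerOp_apply (f : ℓ²(ℤ, 𝕜)) (n : ℤ) :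
    schrodingerOp 𝕜 W f n = f (n - 1) + f (n + 1) + W n * f n := rfl

theorem schrodingerOp_sub_smul_apply (E : ℝ) (f : ℓ²(ℤ, 𝕜)) (n : ℤ) :
    (schrodingerOp 𝕜 W f - E • f) n = f (n - 1) + f (n + 1) + (W n - E) * f n := by
  change f (n - 1) + f (n + 1) + W n * f n - E • f n = _
  rw [RCLike.real_smul_eq_coe_mul]
  ring

theorem isSelfAdjoint_schrodingerOp : IsSelfAdjoint (schrodingerOp 𝕜 W) := by
  have hstar : star (shift 𝕜 1 : ℓ²(ℤ, 𝕜) →L[𝕜] ℓ²(ℤ, 𝕜)) = shift 𝕜 (-1) := by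
    rw [(shift 𝕜 1).star_eq_symm, shift_symm]
  rw [schrodingerOp, ← hstar]
  exact (IsSelfAdjoint.star_add_self _).add (isSelfAdjoint_mulOp 𝕜 W)

theorem schrodingerSpectrum_eq_spectrum_real :
    SchrodingerSpectrum W = spectrum ℝ (schrodingerOp ℝ W) := by
  ext E
  rw [mem_spectrum_iff_not_bijective]
  refine not_congr ⟨?_, fun h => ⟨LinearEquiv.ofBijective
    (schrodingerOp ℝ W - algebraMap ℝ _ E : Ell2 →L[ℝ] Ell2).toLinearMap h,
    schrodingerOp_sub_smul_apply ℝ W E⟩⟩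
  rintro ⟨T, hT⟩
  convert T.bijective with f
  ext n
  exact (schrodingerOp_sub_smul_apply ℝ W E f n).trans (hT f n).symm

theorem spectrum_schrodingerOp_complex :
    spectrum ℝ (schrodingerOp ℂ W) = spectrum ℝ (schrodingerOp ℝ W) := by
  ext E
  have hconj : (fun f => schrodingerOp ℂ W f - E • f) = lpComplexEquiv.symm ∘
      Prod.map (fun f => schrodingerOp ℝ W f - E • f) (fun f => schrodingerOp ℝ W f - E • f) ∘
        lpComplexEquiv := by
    ext f n
    rw [schrodingerOp_sub_smul_apply]
    refine Complex.ext ?_ ?_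
    · refine .trans ?_ (schrodingerOp_sub_smul_apply ℝ W E (lpComplexEquiv f).1 n).symm
      simp [lpComplexEquiv]
    · refine .trans ?_ (schrodingerOp_sub_smul_apply ℝ W E (lpComplexEquiv f).2 n).symm
      simp [lpComplexEquiv]
  rw [mem_spectrum_iff_not_bijective, mem_spectrum_iff_not_bijective, hconj,
    lpComplexEquiv.symm.bijective.of_comp_iff', lpComplexEquiv.bijective.of_comp_iff,
    Prod.map_bijective, and_self]

theorem schrodingerSpectrum_eq_spectrum_complex :
    SchrodingerSpectrum W = spectrum ℝ (schrodingerOp ℂ W) := by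
  rw [schrodingerSpectrum_eq_spectrum_real, spectrum_schrodingerOp_complex]

end SchrodingerOperator

section Eigenvectors

theorem eq_zero_of_recurrence {R : Type*} [NonUnitalNonAssocRing R] {V u : ℤ → R}
    (hu : ∀ n, u (n + 1) = V n * u n - u (n - 1)) (h0 : u 0 = 0) (h1 : u 1 = 0) : u = 0 := by
  have hpair : ∀ n, u n = 0 ∧ u (n + 1) = 0 := fun n => by
    induction n with
    | zero => exact ⟨h0, h1⟩
    | succ n ih => exact ⟨ih.2, by simpa [ih] using hu (n + 1)⟩
    | pred n ih => simpa [ih] using hu (-n)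
  exact funext fun n => (hpair n).1

variable {𝕜 : Type*} [RCLike 𝕜] {W : ℤ →ᵇ ℝ} {E : ℝ}

theorem eq_zero_of_schrodingerOp_eq_smul {u : ℓ²(ℤ, 𝕜)} (hu : schrodingerOp 𝕜 W u = E • u)
    (h0 : u 0 = 0) (h1 : u 1 = 0) : u = 0 := by
  have hrec (n : ℤ) : u (n + 1) = (E - W n) * u n - u (n - 1) := by
    have hn := schrodingerOp_sub_smul_apply 𝕜 W E u n
    rw [sub_eq_zero.2 hu, lp.coeFn_zero, Pi.zero_apply] at hn
    linear_combination -hn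
  have hzero : (u : ℤ → 𝕜) = 0 := eq_zero_of_recurrence hrec h0 h1
  exact lp.ext hzero

/-- Evaluation at `0` and `1` embeds the eigenspace linearly into `𝕜²`; such an embedding of a
finite-dimensional space is a homeomorphism onto its image. -/
theorem tendsto_zero_of_schrodingerOp_eq_smul {ι : Type*} {l : Filter ι} {u : ι → ℓ²(ℤ, 𝕜)}
    (hu : ∀ i, schrodingerOp 𝕜 W (u i) = E • u i) (h0 : Tendsto (fun i => u i 0) l (𝓝 0))
    (h1 : Tendsto (fun i => u i 1) l (𝓝 0)) : Tendsto u l (𝓝 0) := by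
  let K := (schrodingerOp 𝕜 W - algebraMap ℝ _ E : ℓ²(ℤ, 𝕜) →L[𝕜] ℓ²(ℤ, 𝕜)).ker
  let values : K →ₗ[𝕜] 𝕜 × 𝕜 := ((lp.evalₗ _ 2 0).prod (lp.evalₗ _ 2 1)) ∘ₗ K.subtype
  have hker : values.ker = ⊥ := LinearMap.ker_eq_bot'.2 fun v hv => Subtype.ext <|
    eq_zero_of_schrodingerOp_eq_smul (sub_eq_zero.1 v.2) congr(($hv).1) congr(($hv).2)
  have : FiniteDimensional 𝕜 K := .of_injective values (LinearMap.ker_eq_bot.1 hker)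
  have hlim : Tendsto (fun i => (⟨u i, sub_eq_zero.2 (hu i)⟩ : K)) l (𝓝 0) := by
    rw [(LinearMap.isClosedEmbedding_of_injective hker).isInducing.tendsto_nhds_iff, map_zero]
    exact h0.prodMk_nhds h1
  exact (continuous_subtype_val.tendsto _).comp hlim

end Eigenvectors

section TranslationRecurrent

variable {α : Type*} [PseudoMetricSpace α]

/-- The translate `W (· + p)` of a bounded sequence. -/
def translateSeq (p : ℤ) (W : ℤ →ᵇ α) : ℤ →ᵇ α := W.compContinuous ⟨(· + p), by fun_prop⟩

@[simp] theorem translateSeq_apply (p : ℤ) (W : ℤ →ᵇ α) (n : ℤ) :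
    translateSeq p W n = W (n + p) := rfl

theorem dist_translateSeq_le (p : ℤ) (V W : ℤ →ᵇ α) :
    dist (translateSeq p V) (translateSeq p W) ≤ dist V W :=
  (dist_le dist_nonneg).2 fun n => dist_coe_le_dist (n + p)

/-- A bounded sequence is translation recurrent if it is a uniform cluster point of its translates
by `p` as `|p| → ∞`. -/
def IsTranslationRecurrent (W : ℤ →ᵇ α) : Prop :=
  MapClusterPt W cofinite fun p => translateSeq p W

theorem isTranslationRecurrent_iff {W : ℤ →ᵇ α} :
    IsTranslationRecurrent W ↔ ∀ ε > 0, ∃ᶠ p in cofinite, dist (translateSeq p W) W < ε :=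
  Metric.nhds_basis_ball.mapClusterPt_iff_frequently

theorem isClosed_setOf_isTranslationRecurrent :
    IsClosed {W : ℤ →ᵇ α | IsTranslationRecurrent W} := by
  refine isClosed_of_closure_subset fun W hW => isTranslationRecurrent_iff.2 fun ε hε => ?_
  obtain ⟨V, hV, hWV⟩ := Metric.mem_closure_iff.1 hW (ε / 3) (by positivity)
  refine (isTranslationRecurrent_iff.1 hV (ε / 3) (by positivity)).mono fun p hp => ?_
  calc dist (translateSeq p W) W
      ≤ dist (translateSeq p W) (translateSeq p V) + dist (translateSeq p V) V + dist V W :=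
        dist_triangle4 ..
    _ < ε := by linarith [dist_translateSeq_le p W V, dist_comm V W]

theorem IsPeriodicSeq.isTranslationRecurrent {W : ℤ →ᵇ α} (hW : IsPeriodicSeq W) :
    IsTranslationRecurrent W := by
  obtain ⟨q, hq, hper⟩ := hW
  have hmul (j : ℤ) : translateSeq (j * q) W = W := by
    ext n
    exact Function.Periodic.int_mul hper j n
  have hinj : Function.Injective fun j : ℤ => j * q :=
    mul_left_injective₀ (by exact_mod_cast hq.ne')
  refine MapClusterPt.of_comp hinj.tendsto_cofinite ?_
  simpa only [Function.comp_def, hmul] using tendsto_const_nhds.mapClusterPt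

theorem isTranslationRecurrent_of_mem_LPY {k : ℕ} {Y : Set (Fin k → ℝ)} {x : ℤ →ᵇ (Fin k → ℝ)}
    (hx : x ∈ LPY k Y) : IsTranslationRecurrent x :=
  closure_minimal (fun _ hper => hper.1.isTranslationRecurrent)
    isClosed_setOf_isTranslationRecurrent hx

end TranslationRecurrent

section Aggregate

variable {k : ℕ}

/-- The aggregation `agg k x` of a bounded sequence of blocks, as a bounded sequence. -/
def aggregate (k : ℕ) (x : ℤ →ᵇ (Fin k → ℝ)) : ℤ →ᵇ ℝ :=
  .ofNormedAddCommGroupDiscrete (agg k x) ‖x‖ fun n => by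
    unfold agg
    split_ifs
    · exact (norm_le_pi_norm _ _).trans (x.norm_coe_le_norm _)
    · simp

theorem lipschitzWith_aggregate : LipschitzWith 1 (aggregate k) := by
  refine .of_dist_le_mul fun x y => ?_
  rw [NNReal.coe_one, one_mul]
  refine (dist_le dist_nonneg).2 fun n => ?_
  change dist (agg k x n) (agg k y n) ≤ _
  unfold agg
  split_ifs
  · exact (dist_le_pi_dist _ _ _).trans (dist_coe_le_dist _)
  · simp

theorem translateSeq_aggregate (p : ℤ) (x : ℤ →ᵇ (Fin k → ℝ)) :
    translateSeq (k * p) (aggregate k x) = aggregate k (translateSeq p x) := by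
  ext n
  change agg k x (n + k * p) = agg k (translateSeq p x) n
  unfold agg
  split_ifs with hk
  · have hk' : (k : ℤ) ≠ 0 := by exact_mod_cast hk.ne'
    simp only [translateSeq_apply, Int.add_mul_fdiv_left n p hk', Int.add_mul_emod_self_left]
  · rfl

theorem IsTranslationRecurrent.aggregate (hk : 0 < k) {x : ℤ →ᵇ (Fin k → ℝ)}
    (hx : IsTranslationRecurrent x) : IsTranslationRecurrent (aggregate k x) := by
  have hinj : Function.Injective fun p : ℤ => k * p :=
    mul_right_injective₀ (by exact_mod_cast hk.ne')
  refine MapClusterPt.of_comp hinj.tendsto_cofinite ?_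
  simpa only [Function.comp_def, translateSeq_aggregate] using
    hx.continuousAt_comp lipschitzWith_aggregate.continuous.continuousAt

end Aggregate

theorem schrodingerOp_shift {𝕜 : Type*} [RCLike 𝕜] (W : ℤ →ᵇ ℝ) (p : ℤ) (f : ℓ²(ℤ, 𝕜)) :
    schrodingerOp 𝕜 W (shift 𝕜 p f) =
      shift 𝕜 p (schrodingerOp 𝕜 W f) + mulOp 𝕜 (W - translateSeq p W) (shift 𝕜 p f) := by
  ext n
  simp only [schrodingerOp_apply, shift_apply, mulOp_apply, translateSeq_apply, lp.coeFn_add,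
    Pi.add_apply, BoundedContinuousFunction.sub_apply, RCLike.ofReal_sub, add_right_comm n p,
    sub_add_eq_add_sub]
  ring

theorem tendsto_schrodingerOp_shift_sub_smul {𝕜 : Type*} [RCLike 𝕜] {W : ℤ →ᵇ ℝ} {E : ℝ}
    {f : ℓ²(ℤ, 𝕜)} (hf : schrodingerOp 𝕜 W f = E • f) {l : Filter ℤ}
    (hl : Tendsto (fun p => translateSeq p W) l (𝓝 W)) :
    Tendsto (fun p => schrodingerOp 𝕜 W (shift 𝕜 p f) - E • shift 𝕜 p f) l (𝓝 0) := by
  have hdefect (p : ℤ) : schrodingerOp 𝕜 W (shift 𝕜 p f) - E • shift 𝕜 p f =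
      mulOp 𝕜 (W - translateSeq p W) (shift 𝕜 p f) := by
    have hsmul : shift 𝕜 p (E • f) = E • shift 𝕜 p f := rfl
    rw [schrodingerOp_shift, hf, hsmul, add_sub_cancel_left]
  have hle (p : ℤ) : ‖schrodingerOp 𝕜 W (shift 𝕜 p f) - E • shift 𝕜 p f‖ ≤
      dist (translateSeq p W) W * ‖f‖ := by
    rw [hdefect, dist_comm, dist_eq_norm, ← (shift 𝕜 p).norm_map f]
    exact ContinuousLinearMap.le_of_opNorm_le _ (norm_mulOp_le 𝕜 _) _
  have hdist := (tendsto_iff_dist_tendsto_zero.1 hl).mul_const ‖f‖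
  rw [zero_mul] at hdist
  exact squeeze_zero_norm hle hdist

theorem IsTranslationRecurrent.preperfect_schrodingerSpectrum {W : ℤ →ᵇ ℝ}
    (hW : IsTranslationRecurrent W) : Preperfect (SchrodingerSpectrum W) := by
  rw [schrodingerSpectrum_eq_spectrum_complex]
  intro E hE
  by_contra hacc
  have hsa := isSelfAdjoint_schrodingerOp ℂ W
  obtain ⟨f, hf0, hf⟩ := exists_eigenvector_of_not_accPt_spectrum hsa hE hacc
  obtain ⟨U, hU, hUW⟩ := mapClusterPt_iff_ultrafilter.1 hW
  obtain ⟨u, hu, hfu⟩ := exists_eigenvectors_tendsto_sub hsa hacc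
    (tendsto_schrodingerOp_shift_sub_smul hf hUW)
  have hf_apply (n : ℤ) : Tendsto (fun p => shift ℂ p f n) U (𝓝 0) := by
    refine tendsto_zero_iff_norm_tendsto_zero.2 (.mono_left ?_ hU)
    exact (lp_tendsto_norm_cofinite_zero two_ne_zero ENNReal.ofNat_ne_top f).comp
      (add_right_injective n).tendsto_cofinite
  have hfu_apply (n : ℤ) : Tendsto (fun p => shift ℂ p f n - u p n) U (𝓝 0) :=
    ((lp.evalCLM ℂ _ 2 n).continuous.tendsto' 0 0 (map_zero _)).comp hfu
  have hu_apply (n : ℤ) : Tendsto (fun p => u p n) U (𝓝 0) := by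
    simpa only [sub_sub_cancel, sub_zero] using (hf_apply n).sub (hfu_apply n)
  have hu_zero := tendsto_zero_of_schrodingerOp_eq_smul hu (hu_apply 0) (hu_apply 1)
  have hf_zero : Tendsto (fun p => ‖shift ℂ p f‖) U (𝓝 0) := by
    simpa only [sub_add_cancel, add_zero, norm_zero] using (hfu.add hu_zero).norm
  simp only [LinearIsometryEquiv.norm_map, tendsto_const_nhds_iff, norm_eq_zero] at hf_zero
  exact hf0 hf_zero

theorem limitPeriodic_spectrum_preperfect_general (k : ℕ) (hk : 0 < k) (x : ℤ →ᵇ (Fin k → ℝ))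
    (hx : IsTranslationRecurrent x) : Preperfect (SchrodingerSpectrum (agg k x)) :=
  (hx.aggregate hk).preperfect_schrodingerSpectrum

/-- For any limit-periodic `x ∈ LP(ℤ,Y)` over a closed perfect set `Y ⊆ ℝ^k`,
the spectrum of `H_x` has no isolated points. -/
theorem limitPeriodic_spectrum_preperfect (k : ℕ) (hk : 0 < k)
    (Y : Set (Fin k → ℝ)) (hY : Perfect Y)
    (x : ℤ →ᵇ (Fin k → ℝ)) (hx : x ∈ LPY k Y) :
    Preperfect (SchrodingerSpectrum (agg k ⇑x)) :=
  limitPeriodic_spectrum_preperfect_general k hk x (isTranslationRecurrent_of_mem_LPY hx)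
end
end
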